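/- Let U be a submodular distributive universe of separations. Then for every set 𝒫 of pairwise distinguishable strongly robust profiles in U there is a nested set T ⊆ U of separations such that: (i) every two profiles in 𝒫 are distinguished by some separation in T; and (ii) for every profile P ∈ 𝒫, every maximal element s of the set of orientations of members of T lying in P, and every s' ∈ P with s ≤ s', we have |s| ≤ |s'|. -/

import Mathlib

namespace SepDemo

/-- A universe of separations: a finite lattice with an order-reversing involution. -/
structure SepUniverse (U : Type*) [Lattice U] [Fintype U] where
  inv : U → U
  inv_inv : ∀ s, inv (inv s) = s
  le_iff : ∀ r s : U, r ≤ s ↔ inv s ≤ inv r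

/-- A submodular universe: a universe with a submodular order function. -/
structure SubmodUniverse (U : Type*) [Lattice U] [Fintype U] extends SepUniverse U where
  ord : U → ℕ
  ord_inv : ∀ s, ord (inv s) = ord s
  submod : ∀ s t : U, ord (s ⊔ t) + ord (s ⊓ t) ≤ ord s + ord t

variable {U : Type*} [Lattice U] [Fintype U]

/-- A separation system inside a universe: a subset closed under the involution. -/
def SepSystem (𝒰 : SepUniverse U) (S : Set U) : Prop :=
  ∀ s ∈ S, 𝒰.inv s ∈ S

/-- An orientation of `S`: contains, for each `s ∈ S`, exactly one of `s`, `s*`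
(just `s` itself if `s` is degenerate). -/
def IsOrientation (𝒰 : SepUniverse U) (S O : Set U) : Prop :=
  O ⊆ S ∧ ∀ s ∈ S, (s ∈ O ∨ 𝒰.inv s ∈ O) ∧ (s ∈ O → 𝒰.inv s ∈ O → s = 𝒰.inv s)

/-- Consistency: no `r, s ∈ O` with `{r,r*} ≠ {s,s*}` and `r* ≤ s`. -/
def Consistent (𝒰 : SepUniverse U) (O : Set U) : Prop :=
  ∀ r ∈ O, ∀ s ∈ O, ({r, 𝒰.inv r} : Set U) ≠ ({s, 𝒰.inv s} : Set U) → ¬ 𝒰.inv r ≤ s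

/-- A profile of `S`: a consistent orientation satisfying the profile property. -/
def IsProfile (𝒰 : SepUniverse U) (S P : Set U) : Prop :=
  IsOrientation 𝒰 S P ∧ Consistent 𝒰 P ∧ ∀ r ∈ P, ∀ s ∈ P, 𝒰.inv (r ⊔ s) ∉ P

/-- Regular: contains no cosmall separation. -/
def Regular (𝒰 : SepUniverse U) (P : Set U) : Prop :=
  ∀ s ∈ P, ¬ 𝒰.inv s ≤ s

/-- Two separations are nested. -/
def Nested (𝒰 : SepUniverse U) (r s : U) : Prop :=
  r ≤ s ∨ r ≤ 𝒰.inv s ∨ 𝒰.inv r ≤ s ∨ 𝒰.inv r ≤ 𝒰.inv s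

/-- A set of separations is nested if its members are pairwise nested. -/
def NestedSet (𝒰 : SepUniverse U) (N : Set U) : Prop :=
  ∀ r ∈ N, ∀ s ∈ N, Nested 𝒰 r s

/-- `s` distinguishes the orientations `O₁` and `O₂`. -/
def Distinguishes (𝒰 : SepUniverse U) (s : U) (O₁ O₂ : Set U) : Prop :=
  (s ∈ O₁ ∧ 𝒰.inv s ∈ O₂) ∨ (𝒰.inv s ∈ O₁ ∧ s ∈ O₂)

/-- Two orientations are distinguishable. -/
def Distinguishable (𝒰 : SepUniverse U) (P Q : Set U) : Prop :=
  ∃ s : U, Distinguishes 𝒰 s P Q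

/-- Structural submodularity of a separation system. -/
def StructSubmodular (S : Set U) : Prop :=
  ∀ s ∈ S, ∀ t ∈ S, s ⊔ t ∈ S ∨ s ⊓ t ∈ S

/-- `s` is trivial in `S`. -/
def IsTrivialIn (𝒰 : SepUniverse U) (S : Set U) (s : U) : Prop :=
  ∃ r ∈ S, ({r, 𝒰.inv r} : Set U) ≠ ({s, 𝒰.inv s} : Set U) ∧ s ≤ r ∧ s ≤ 𝒰.inv r

/-- A star of separations. -/
def IsStar (𝒰 : SepUniverse U) (σ : Set U) : Prop :=
  ∀ r ∈ σ, ∀ s ∈ σ, r ≠ s → r ≤ 𝒰.inv s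

/-- The shift `σ_x^{s₀}` of a star `σ` at `x ∈ σ` to `s₀`. -/
def shiftStar (𝒰 : SepUniverse U) (σ : Set U) (x s₀ : U) : Set U :=
  insert (x ⊔ s₀) ((fun y => y ⊓ 𝒰.inv s₀) '' (σ \ {x}))

/-- `s₀` emulates `r` in `S`. -/
def Emulates (𝒰 : SepUniverse U) (S : Set U) (s₀ r : U) : Prop :=
  r ≤ s₀ ∧ ∀ t ∈ S, t ≠ 𝒰.inv r → r ≤ t → t ⊔ s₀ ∈ S

/-- `s₀` emulates `r` in `S` for a set `F` of stars. -/
def EmulatesFor (𝒰 : SepUniverse U) (S : Set U) (F : Set (Set U)) (s₀ r : U) : Prop :=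
  Emulates 𝒰 S s₀ r ∧
    ∀ σ ∈ F, 𝒰.inv r ∉ σ → ∀ x ∈ σ, r ≤ x → shiftStar 𝒰 σ x s₀ ∈ F

/-- `F` forces `s`. -/
def Forces (𝒰 : SepUniverse U) (F : Set (Set U)) (s : U) : Prop :=
  ({𝒰.inv s} : Set U) ∈ F

/-- `S` is `F`-separable. -/
def FSeparable (𝒰 : SepUniverse U) (S : Set U) (F : Set (Set U)) : Prop :=
  ∀ r₁ ∈ S, ∀ r₂ ∈ S,
    ¬ IsTrivialIn 𝒰 S r₁ → ¬ IsTrivialIn 𝒰 S r₂ →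
    r₁ ≠ 𝒰.inv r₁ → r₂ ≠ 𝒰.inv r₂ →
    ¬ Forces 𝒰 F r₁ → ¬ Forces 𝒰 F r₂ →
    r₁ ≤ 𝒰.inv r₂ →
    ∃ s₀ ∈ S, r₁ ≤ s₀ ∧ s₀ ≤ 𝒰.inv r₂ ∧
      EmulatesFor 𝒰 S F s₀ r₁ ∧ EmulatesFor 𝒰 S F (𝒰.inv s₀) r₂

/-- `r` is `F`-critical. -/
def FCritical (𝒰 : SepUniverse U) (F : Set (Set U)) (r : U) : Prop :=
  (∃ σ ∈ F, r ∈ σ) ∧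
    ¬ ∃ σ' ∈ F, σ' ∩ ({r, 𝒰.inv r} : Set U) = ({𝒰.inv r} : Set U)

/-- `S` is critically `F`-separable. -/
def CritFSeparable (𝒰 : SepUniverse U) (S : Set U) (F : Set (Set U)) : Prop :=
  ∀ r₁ ∈ S, ∀ r₂ ∈ S, FCritical 𝒰 F r₁ → FCritical 𝒰 F r₂ → r₁ ≤ 𝒰.inv r₂ →
    ∃ s₀ ∈ S, EmulatesFor 𝒰 S F s₀ r₁ ∧ EmulatesFor 𝒰 S F (𝒰.inv s₀) r₂

/-- An `F`-tangle of `S`: a consistent orientation including no member of `F`. -/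
def FTangle (𝒰 : SepUniverse U) (S : Set U) (F : Set (Set U)) (O : Set U) : Prop :=
  IsOrientation 𝒰 S O ∧ Consistent 𝒰 O ∧ ∀ σ ∈ F, ¬ σ ⊆ O

/-- `F` is standard for `S`: it forces all trivial separations of `S`. -/
def StandardFor (𝒰 : SepUniverse U) (S : Set U) (F : Set (Set U)) : Prop :=
  ∀ r ∈ S, IsTrivialIn 𝒰 S r → ({𝒰.inv r} : Set U) ∈ F

/-- An `S`-tree: a finite tree together with edge labels in `S` commuting with
the involution. -/
structure STree (𝒰 : SepUniverse U) (S : Set U) where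
  V : Type
  fintypeV : Fintype V
  G : SimpleGraph V
  isTree : G.IsTree
  label : V → V → U
  label_mem : ∀ x y, G.Adj x y → label x y ∈ S
  label_inv : ∀ x y, G.Adj x y → label y x = 𝒰.inv (label x y)

namespace STree

variable {𝒰 : SepUniverse U} {S : Set U}

/-- The star `α(t)` associated with a node `t`. -/
def nodeStar (T : STree 𝒰 S) (t : T.V) : Set U :=
  {u | ∃ s, T.G.Adj s t ∧ T.label s t = u}

/-- The `S`-tree is over `F`. -/
def Over (T : STree 𝒰 S) (F : Set (Set U)) : Prop :=
  ∀ t : T.V, T.nodeStar t ∈ F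

/-- Irredundance of an `S`-tree. -/
def Irredundant (T : STree 𝒰 S) : Prop :=
  ∀ t t' t'' : T.V, T.G.Adj t' t → T.G.Adj t'' t → t' ≠ t'' →
    T.label t' t ≠ T.label t'' t

/-- The set of edge labels of the tree. -/
def labels (T : STree 𝒰 S) : Set U :=
  {u | ∃ x y, T.G.Adj x y ∧ T.label x y = u}

/-- `t` is a sink of the orientation of the tree induced by `P`. -/
def IsSinkOf (T : STree 𝒰 S) (P : Set U) (t : T.V) : Prop :=
  ∀ s, T.G.Adj s t → T.label s t ∈ P

/-- The degree of a node. -/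
noncomputable def deg (T : STree 𝒰 S) (t : T.V) : ℕ :=
  (T.G.neighborSet t).ncard

/-- The maximum degree of the tree. -/
noncomputable def maxDeg (T : STree 𝒰 S) : ℕ :=
  sSup {n | ∃ t : T.V, T.deg t = n}

end STree

/-- A tree of tangles for `S`: an irredundant `S`-tree whose edge labels
distinguish every two distinct regular profiles of `S`. -/
def TreeOfTangles (𝒰 : SepUniverse U) (S : Set U) (T : STree 𝒰 S) : Prop :=
  T.Irredundant ∧
    ∀ P Q : Set U, IsProfile 𝒰 S P → Regular 𝒰 P → IsProfile 𝒰 S Q → Regular 𝒰 Q →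
      P ≠ Q → ∃ s ∈ T.labels, Distinguishes 𝒰 s P Q

/-- `δ(P)`: the minimum size of a subset of `P` distinguishing `P` from every
other regular profile of `S`. -/
noncomputable def deltaP (𝒰 : SepUniverse U) (S P : Set U) : ℕ :=
  sInf {n | ∃ D : Set U, D ⊆ P ∧ D.ncard = n ∧
    ∀ Q : Set U, IsProfile 𝒰 S Q → Regular 𝒰 Q → Q ≠ P →
      ∃ s ∈ D, Distinguishes 𝒰 s P Q}

/-- `S_k`: the separations of order less than `k`. -/
def Sk (𝒱 : SubmodUniverse U) (k : ℕ) : Set U := {s | 𝒱.ord s < k}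

/-- `s` distinguishes `P` and `Q` efficiently. -/
def EffDistinguishes (𝒱 : SubmodUniverse U) (s : U) (P Q : Set U) : Prop :=
  Distinguishes 𝒱.toSepUniverse s P Q ∧
    ∀ t : U, Distinguishes 𝒱.toSepUniverse t P Q → 𝒱.ord s ≤ 𝒱.ord t

/-- Property `Eff(P)` of a star `σ`. -/
def EffProp (𝒱 : SubmodUniverse U) (σ P : Set U) : Prop :=
  ¬ ∃ s ∈ σ, ∃ s' ∈ P, s ≤ s' ∧ 𝒱.ord s' < 𝒱.ord s

/-- `s` is a splice for `r`. -/
def SpliceFor (𝒱 : SubmodUniverse U) (s r : U) : Prop :=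
  r ≤ s ∧ ¬ ∃ t : U, r ≤ t ∧ t ≤ s ∧ 𝒱.ord t < 𝒱.ord s

/-- `s` is a splice between `r₁` and `r₂`. -/
def SpliceBetween (𝒱 : SubmodUniverse U) (s r₁ r₂ : U) : Prop :=
  r₁ ≤ s ∧ s ≤ r₂ ∧ ∀ t : U, r₁ ≤ t → t ≤ r₂ → 𝒱.ord s ≤ 𝒱.ord t

/-- The set `F_e` of stars in `S_k` included in at most one profile of `𝔓` and
satisfying `Eff(P)` whenever included in `P ∈ 𝔓`. -/
def Fe (𝒱 : SubmodUniverse U) (k : ℕ) (𝔓 : Set (Set U)) : Set (Set U) :=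
  {σ | σ ⊆ Sk 𝒱 k ∧ IsStar 𝒱.toSepUniverse σ ∧
    (∀ P ∈ 𝔓, ∀ Q ∈ 𝔓, σ ⊆ P → σ ⊆ Q → P = Q) ∧
    (∀ P ∈ 𝔓, σ ⊆ P → EffProp 𝒱 σ P)}

/-- `δ_e(P)`: the minimum size of a star `σ ⊆ P` with `Eff(P)` such that every
other regular profile of `S_k` contains the inverse of some element of `σ`. -/
noncomputable def deltaE (𝒱 : SubmodUniverse U) (k : ℕ) (P : Set U) : ℕ :=
  sInf {n | ∃ σ : Set U, σ ⊆ P ∧ IsStar 𝒱.toSepUniverse σ ∧ EffProp 𝒱 σ P ∧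
    σ.ncard = n ∧
    ∀ Q : Set U, IsProfile 𝒱.toSepUniverse (Sk 𝒱 k) Q → Regular 𝒱.toSepUniverse Q →
      Q ≠ P → ∃ s ∈ σ, 𝒱.inv s ∈ Q}

/-- `δ_{e,max}`: maximum of `δ_e` over all regular profiles of `S_k`. -/
noncomputable def deltaEMax (𝒱 : SubmodUniverse U) (k : ℕ) : ℕ :=
  sSup {n | ∃ P : Set U, IsProfile 𝒱.toSepUniverse (Sk 𝒱 k) P ∧
    Regular 𝒱.toSepUniverse P ∧ deltaE 𝒱 k P = n}

/-- `P` is a profile in `U`: a `k`-profile for some `k`. -/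
def ProfileIn (𝒱 : SubmodUniverse U) (P : Set U) : Prop :=
  ∃ k : ℕ, IsProfile 𝒱.toSepUniverse (Sk 𝒱 k) P

/-- Strong robustness of a profile. -/
def StronglyRobust (𝒱 : SubmodUniverse U) (P : Set U) : Prop :=
  ∀ s ∈ P, ∀ r : U, 𝒱.ord (s ⊔ r) ≤ 𝒱.ord s → 𝒱.ord (s ⊔ 𝒱.inv r) ≤ 𝒱.ord s →
    (s ⊔ r ∈ P ∨ s ⊔ 𝒱.inv r ∈ P)

/-- `O` weakly orients a separation as `s'` if `s' ≤ r` for some `r ∈ O`. -/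
def WeaklyOrientsAs (O : Set U) (s' : U) : Prop :=
  ∃ r ∈ O, s' ≤ r

/-- `O` weakly orients `s` (as `s` or as `s*`). -/
def WeaklyOrients (𝒰 : SepUniverse U) (O : Set U) (s : U) : Prop :=
  WeaklyOrientsAs O s ∨ WeaklyOrientsAs O (𝒰.inv s)

/-- The set `F_d` of stars, relative to the set of profiles `𝔓`. -/
def Fd (𝒱 : SubmodUniverse U) (𝔓 : Set (Set U)) : Set (Set U) :=
  {σ | IsStar 𝒱.toSepUniverse σ ∧
    (∀ P ∈ 𝔓, ∀ Q ∈ 𝔓, σ ⊆ P → σ ⊆ Q → P = Q) ∧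
    (∀ P ∈ 𝔓, ¬ σ ⊆ P → ∃ s ∈ σ, WeaklyOrientsAs P (𝒱.inv s)) ∧
    (∀ P ∈ 𝔓, σ ⊆ P → EffProp 𝒱 σ P)}

section Helpers

lemma inv_sup' (𝒰 : SepUniverse U) (a b : U) : 𝒰.inv (a ⊔ b) = 𝒰.inv a ⊓ 𝒰.inv b := by
  apply le_antisymm
  · exact le_inf ((𝒰.le_iff _ _).1 le_sup_left) ((𝒰.le_iff _ _).1 le_sup_right)
  · rw [𝒰.le_iff, 𝒰.inv_inv]
    refine sup_le ?_ ?_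
    · have := (𝒰.le_iff _ _).1 (inf_le_left : 𝒰.inv a ⊓ 𝒰.inv b ≤ _)
      rwa [𝒰.inv_inv] at this
    · have := (𝒰.le_iff _ _).1 (inf_le_right : 𝒰.inv a ⊓ 𝒰.inv b ≤ _)
      rwa [𝒰.inv_inv] at this

lemma inv_le_comm' (𝒰 : SepUniverse U) {a b : U} (h : 𝒰.inv a ≤ b) : 𝒰.inv b ≤ a := by
  have := (𝒰.le_iff _ _).1 h
  rwa [𝒰.inv_inv] at this

lemma le_inv_comm' (𝒰 : SepUniverse U) {a b : U} (h : a ≤ 𝒰.inv b) : b ≤ 𝒰.inv a := by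
  have := (𝒰.le_iff _ _).1 h
  rwa [𝒰.inv_inv] at this

lemma Nested.symm' {𝒰 : SepUniverse U} {a b : U} (h : Nested 𝒰 a b) : Nested 𝒰 b a := by
  rcases h with h | h | h | h
  · exact Or.inr (Or.inr (Or.inr ((𝒰.le_iff _ _).1 h)))
  · exact Or.inr (Or.inl (le_inv_comm' 𝒰 h))
  · exact Or.inr (Or.inr (Or.inl (inv_le_comm' 𝒰 h)))
  · exact Or.inl ((𝒰.le_iff _ _).2 h)

lemma Nested.refl' (𝒰 : SepUniverse U) (a : U) : Nested 𝒰 a a := Or.inl le_rfl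

lemma nested_inv_right {𝒰 : SepUniverse U} {a b : U} :
    Nested 𝒰 a (𝒰.inv b) ↔ Nested 𝒰 a b := by
  unfold Nested
  rw [𝒰.inv_inv]
  tauto

lemma nested_inv_left {𝒰 : SepUniverse U} {a b : U} :
    Nested 𝒰 (𝒰.inv a) b ↔ Nested 𝒰 a b := by
  unfold Nested
  rw [𝒰.inv_inv]
  tauto

/-- `c` behaves like a corner of `a` and `b`. -/
def CornerLike (𝒰 : SepUniverse U) (a b c : U) : Prop :=
  Nested 𝒰 c a ∧ Nested 𝒰 c b ∧ ∀ x, Nested 𝒰 x a → Nested 𝒰 x b → Nested 𝒰 x c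

lemma CornerLike.swap {𝒰 : SepUniverse U} {a b c : U} (h : CornerLike 𝒰 a b c) :
    CornerLike 𝒰 b a c := ⟨h.2.1, h.1, fun x hb ha => h.2.2 x ha hb⟩

lemma cornerLike_inv_left {𝒰 : SepUniverse U} {a b c : U} :
    CornerLike 𝒰 (𝒰.inv a) b c ↔ CornerLike 𝒰 a b c := by
  simp only [CornerLike, nested_inv_right]

lemma cornerLike_inv_right {𝒰 : SepUniverse U} {a b c : U} :
    CornerLike 𝒰 a (𝒰.inv b) c ↔ CornerLike 𝒰 a b c := by
  simp only [CornerLike, nested_inv_right]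

/-- The fish lemma. -/
lemma cornerLike_sup {𝒰 : SepUniverse U} {a b : U} (hab : ¬ Nested 𝒰 a b) :
    CornerLike 𝒰 a b (a ⊔ b) := by
  refine ⟨Nested.symm' (Or.inl le_sup_left), Nested.symm' (Or.inl le_sup_right), ?_⟩
  intro x ha hb
  have ha' := ha.symm'
  have hb' := hb.symm'
  rcases ha with h | h | h | h
  · exact Or.inl (h.trans le_sup_left)
  · have h := le_inv_comm' 𝒰 h
    rcases hb with k | k | k | k
    · exact Or.inl (k.trans le_sup_right)
    · exact Nested.symm' (Or.inr (Or.inl (sup_le h (le_inv_comm' 𝒰 k))))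
    · exact Or.inr (Or.inr (Or.inl (k.trans le_sup_right)))
    · exact absurd (Or.inr (Or.inl (h.trans k))) hab
  · exact Or.inr (Or.inr (Or.inl (h.trans le_sup_left)))
  · have h := (𝒰.le_iff _ _).2 h
    rcases hb with k | k | k | k
    · exact Or.inl (k.trans le_sup_right)
    · exact absurd (Or.inr (Or.inl (h.trans k))) hab
    · exact Or.inr (Or.inr (Or.inl (k.trans le_sup_right)))
    · exact Nested.symm' (Or.inl (sup_le h ((𝒰.le_iff _ _).2 k)))

/-- A splinter lemma, for an arbitrary reflexive symmetric relation. -/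
lemma splinter {α ι : Type*} [Nonempty α] (R : α → α → Prop) (hrefl : ∀ a, R a a)
    (hsymm : ∀ a b, R a b → R b a) (s : Finset ι) :
    ∀ A : ι → Set α, (∀ i ∈ s, (A i).Nonempty) →
      (∀ i ∈ s, ∀ j ∈ s, ∀ a ∈ A i, ∀ b ∈ A j, R a b ∨ a ∈ A j ∨ b ∈ A i ∨
        ∃ c, (c ∈ A i ∨ c ∈ A j) ∧ R c a ∧ R c b ∧ ∀ x, R x a → R x b → R x c) →
      ∃ f : ι → α, (∀ i ∈ s, f i ∈ A i) ∧ ∀ i ∈ s, ∀ j ∈ s, R (f i) (f j) := by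
  classical
  induction s using Finset.induction_on with
  | empty =>
    intro A _ _
    exact ⟨fun _ => Classical.arbitrary α, by simp, by simp⟩
  | insert m s hm ih =>
    intro A hne hs
    obtain ⟨f, hf, hfn⟩ := ih A (fun i hi => hne i (Finset.mem_insert_of_mem hi))
      (fun i hi j hj => hs i (Finset.mem_insert_of_mem hi) j (Finset.mem_insert_of_mem hj))
    have hex : ∃ n, ∃ a ∈ A m, (s.filter (fun i => ¬ R a (f i))).card = n := by
      obtain ⟨a, ha⟩ := hne m (Finset.mem_insert_self _ _)
      exact ⟨_, a, ha, rfl⟩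
    obtain ⟨a, ha, hcard⟩ := Nat.find_spec hex
    have hmin : ∀ b ∈ A m, (s.filter (fun i => ¬ R a (f i))).card ≤
        (s.filter (fun i => ¬ R b (f i))).card := by
      intro b hb
      rw [hcard]
      exact Nat.find_min' hex ⟨b, hb, rfl⟩
    have hlt : ∀ i ∈ s, ¬ R a (f i) → ∀ c ∈ A m, R c (f i) →
        (∀ j ∈ s, R a (f j) → R c (f j)) → False := by
      intro i hi hai c hc hci hcj
      refine absurd (hmin c hc) (not_le.2 (Finset.card_lt_card ?_))
      refine ⟨?_, ?_⟩
      · intro j hj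
        simp only [Finset.mem_filter] at hj ⊢
        exact ⟨hj.1, fun h => hj.2 (hcj j hj.1 h)⟩
      · intro hsub
        have := hsub (Finset.mem_filter.2 ⟨hi, hai⟩)
        exact (Finset.mem_filter.1 this).2 hci
    have hall : ∀ i ∈ s, ∃ c ∈ A i, R c a := by
      intro i hi
      by_cases hai : R a (f i)
      · exact ⟨f i, hf i hi, hsymm _ _ hai⟩
      rcases hs m (Finset.mem_insert_self _ _) i (Finset.mem_insert_of_mem hi) a ha (f i)
        (hf i hi) with h | h | h | ⟨c, hc | hc, hca, hci, hx⟩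
      · exact absurd h hai
      · exact ⟨a, h, hrefl a⟩
      · exact (hlt i hi hai (f i) h (hrefl _) (fun j hj _ => hfn i hi j hj)).elim
      · exact (hlt i hi hai c hc hci (fun j hj h => hsymm _ _
          (hx _ (hsymm _ _ h) (hfn j hj i hi)))).elim
      · exact ⟨c, hc, hca⟩
    obtain ⟨g, hg, hgn⟩ := ih (fun i => {c | c ∈ A i ∧ R c a}) hall (by
      intro i hi j hj x hx y hy
      rcases hs i (Finset.mem_insert_of_mem hi) j (Finset.mem_insert_of_mem hj) x hx.1 y hy.1
        with h | h | h | ⟨c, hc, hcx, hcy, hz⟩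
      · exact Or.inl h
      · exact Or.inr (Or.inl ⟨h, hx.2⟩)
      · exact Or.inr (Or.inr (Or.inl ⟨h, hy.2⟩))
      · have hca := hsymm _ _ (hz a (hsymm _ _ hx.2) (hsymm _ _ hy.2))
        exact Or.inr (Or.inr (Or.inr ⟨c, hc.imp (fun h => ⟨h, hca⟩) (fun h => ⟨h, hca⟩),
          hcx, hcy, hz⟩)))
    have hne' : ∀ i ∈ s, i ≠ m := fun i hi h => hm (h ▸ hi)
    refine ⟨Function.update g m a, ?_, ?_⟩
    · intro i hi
      rcases Finset.mem_insert.1 hi with rfl | hi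
      · simpa using ha
      · rw [Function.update_of_ne (hne' i hi)]
        exact (hg i hi).1
    · intro i hi j hj
      rcases Finset.mem_insert.1 hi with rfl | hi' <;> rcases Finset.mem_insert.1 hj with rfl | hj'
      · exact hrefl _
      · rw [Function.update_of_ne (hne' j hj'), Function.update_self]
        exact hsymm _ _ (hg j hj').2
      · rw [Function.update_of_ne (hne' i hi'), Function.update_self]
        exact (hg i hi').2
      · rw [Function.update_of_ne (hne' j hj'), Function.update_of_ne (hne' i hi')]
        exact hgn i hi' j hj'

lemma prof_not_both {𝒱 : SubmodUniverse U} {P : Set U} (hP : ProfileIn 𝒱 P) {s : U}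
    (h : s ∈ P) : 𝒱.inv s ∉ P := by
  obtain ⟨k, _, _, h3⟩ := hP
  simpa using h3 s h s h

lemma prof_orient {𝒱 : SubmodUniverse U} {P : Set U} (hP : ProfileIn 𝒱 P) {s t : U}
    (h : s ∈ P) (ht : 𝒱.ord t ≤ 𝒱.ord s) : t ∈ P ∨ 𝒱.inv t ∈ P := by
  obtain ⟨k, ⟨h1, h2⟩, _, _⟩ := hP
  exact (h2 t (lt_of_le_of_lt ht (h1 h))).1

lemma prof_down {𝒱 : SubmodUniverse U} {P : Set U} (hP : ProfileIn 𝒱 P) {s t : U}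
    (h : s ∈ P) (ht : 𝒱.ord t ≤ 𝒱.ord s) (hts : t ≤ s) (hne : t ≠ 𝒱.inv s) : t ∈ P := by
  rcases prof_orient hP h ht with h' | h'
  · exact h'
  · exfalso
    have hb := prof_not_both hP h
    obtain ⟨k, _, hc, _⟩ := hP
    refine hc _ h' _ h ?_ (by rwa [𝒱.inv_inv])
    intro heq
    have : 𝒱.inv t ∈ ({s, 𝒱.inv s} : Set U) := heq ▸ Set.mem_insert _ _
    rcases this with h1 | h1
    · exact hne (by rw [← h1, 𝒱.inv_inv])
    · rw [Set.mem_singleton_iff] at h1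
      exact hb (h1 ▸ h')

lemma prof_sup {𝒱 : SubmodUniverse U} {P : Set U} (hP : ProfileIn 𝒱 P) {s t : U}
    (h : s ∈ P) (ht : t ∈ P) (ho : 𝒱.ord (s ⊔ t) ≤ 𝒱.ord s) : s ⊔ t ∈ P := by
  rcases prof_orient hP h ho with h' | h'
  · exact h'
  · obtain ⟨k, _, _, h3⟩ := hP
    exact absurd h' (h3 s h t ht)

lemma dist_swap {𝒰 : SepUniverse U} {s : U} {P Q : Set U} :
    Distinguishes 𝒰 s P Q ↔ Distinguishes 𝒰 s Q P := by
  unfold Distinguishes; tauto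

lemma dist_inv {𝒰 : SepUniverse U} {s : U} {P Q : Set U} :
    Distinguishes 𝒰 (𝒰.inv s) P Q ↔ Distinguishes 𝒰 s P Q := by
  unfold Distinguishes; rw [𝒰.inv_inv]; tauto

lemma eff_swap {𝒱 : SubmodUniverse U} {s : U} {P Q : Set U} :
    EffDistinguishes 𝒱 s P Q ↔ EffDistinguishes 𝒱 s Q P := by
  simp only [EffDistinguishes, dist_swap (P := P) (Q := Q)]

lemma eff_inv {𝒱 : SubmodUniverse U} {s : U} {P Q : Set U} :
    EffDistinguishes 𝒱 (𝒱.inv s) P Q ↔ EffDistinguishes 𝒱 s P Q := by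
  simp only [EffDistinguishes, dist_inv, 𝒱.ord_inv]

/-- A corner of small order efficiently distinguishes. -/
lemma eff_corner {𝒱 : SubmodUniverse U} {Q Q' : Set U} (hQ : ProfileIn 𝒱 Q)
    (hQ' : ProfileIn 𝒱 Q') {r s : U} (hs : EffDistinguishes 𝒱 s Q Q') (hsQ : s ∈ Q)
    (hsQ' : 𝒱.inv s ∈ Q') (hr : r ∈ Q) (hn : ¬ Nested 𝒱.toSepUniverse r s)
    (ho : 𝒱.ord (s ⊔ r) ≤ 𝒱.ord s) : EffDistinguishes 𝒱 (s ⊔ r) Q Q' := by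
  refine ⟨Or.inl ⟨prof_sup hQ hsQ hr ho, ?_⟩, fun t ht => ho.trans (hs.2 t ht)⟩
  refine prof_down hQ' hsQ' (by rwa [𝒱.ord_inv, 𝒱.ord_inv])
    ((𝒱.le_iff _ _).1 le_sup_left) ?_
  intro h
  rw [𝒱.inv_inv] at h
  apply hn
  right; left
  rw [← h, 𝒱.inv_inv]
  exact le_sup_right

/-- Uncrossing when both profiles contain the same orientation. -/
lemma uncross_lt {𝒱 : SubmodUniverse U} {P P' Q Q' : Set U} (hP : ProfileIn 𝒱 P)
    (hrob : StronglyRobust 𝒱 P) (hP' : ProfileIn 𝒱 P') (hQ : ProfileIn 𝒱 Q)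
    (hQ' : ProfileIn 𝒱 Q') {r s : U} (hr : EffDistinguishes 𝒱 r P P')
    (hrP : 𝒱.inv r ∈ P) (hrP' : r ∈ P')
    (hs : EffDistinguishes 𝒱 s Q Q') (hsQ : s ∈ Q)
    (hsQ' : 𝒱.inv s ∈ Q') (hrQ : r ∈ Q) (hrQ' : r ∈ Q')
    (hn : ¬ Nested 𝒱.toSepUniverse r s) :
    ∃ c, EffDistinguishes 𝒱 c Q Q' ∧ CornerLike 𝒱.toSepUniverse r s c := by
  have hn2 : ¬ Nested 𝒱.toSepUniverse r (𝒱.inv s) := fun h => hn (nested_inv_right.1 h)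
  by_cases h1 : 𝒱.ord (s ⊔ r) ≤ 𝒱.ord s
  · exact ⟨_, eff_corner hQ hQ' hs hsQ hsQ' hrQ hn h1,
      (cornerLike_sup (fun h => hn h.symm')).swap⟩
  by_cases h2 : 𝒱.ord (𝒱.inv s ⊔ r) ≤ 𝒱.ord (𝒱.inv s)
  · refine ⟨_, eff_swap.1 (eff_corner hQ' hQ (eff_swap.1 (eff_inv.2 hs)) hsQ'
      (by rwa [𝒱.inv_inv]) hrQ' hn2 h2), ?_⟩
    exact (cornerLike_inv_left.1 (cornerLike_sup (fun h => hn2 h.symm'))).swap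
  exfalso
  have key : ∀ u : U, 𝒱.ord (𝒱.inv u) < 𝒱.ord (𝒱.inv u ⊔ r) →
      𝒱.ord (𝒱.inv r ⊔ u) < 𝒱.ord r := by
    intro u hu
    have := 𝒱.submod (𝒱.inv u) r
    have e : 𝒱.ord (𝒱.inv r ⊔ u) = 𝒱.ord (𝒱.inv u ⊓ r) := by
      rw [← 𝒱.ord_inv, inv_sup', 𝒱.inv_inv, inf_comm]
    omega
  have key2 : ∀ u : U, 𝒱.ord (𝒱.inv r ⊔ u) < 𝒱.ord r → 𝒱.inv r ⊔ u ∉ P := by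
    intro u hu hmem
    refine absurd (hr.2 (𝒱.inv r ⊔ u) (Or.inl ⟨hmem, ?_⟩)) (not_le.2 hu)
    refine prof_down hP' hrP' (by rw [𝒱.ord_inv]; exact hu.le) ?_ ?_
    · rw [inv_sup', 𝒱.inv_inv]; exact inf_le_left
    · intro h
      have := congrArg 𝒱.ord h
      rw [𝒱.ord_inv, 𝒱.ord_inv] at this
      omega
  have k1 := key s (not_le.1 h2)
  have k2 := key (𝒱.inv s) (by rw [𝒱.inv_inv]; exact not_le.1 h1)
  rcases hrob _ hrP s (by rw [𝒱.ord_inv]; exact k1.le) (by rw [𝒱.ord_inv]; exact k2.le)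
    with h | h
  · exact key2 _ k1 h
  · exact key2 _ k2 h

lemma oriented {𝒱 : SubmodUniverse U} {P Q : Set U} {s : U}
    (hs : EffDistinguishes 𝒱 s P Q) :
    ∃ t, (t = s ∨ t = 𝒱.inv s) ∧ t ∈ P ∧ 𝒱.inv t ∈ Q := by
  rcases hs.1 with h | h
  · exact ⟨s, Or.inl rfl, h⟩
  · exact ⟨_, Or.inr rfl, h.1, by rw [𝒱.inv_inv]; exact h.2⟩

/-- Two profiles orienting a separation that does not distinguish them agree on it. -/
lemma agree {𝒱 : SubmodUniverse U} {Q Q' : Set U} (hQ : ProfileIn 𝒱 Q)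
    (hQ' : ProfileIn 𝒱 Q') {r s : U} (hs : EffDistinguishes 𝒱 s Q Q')
    (ho : 𝒱.ord r ≤ 𝒱.ord s) (hr : ¬ Distinguishes 𝒱.toSepUniverse r Q Q') :
    ∃ t, (t = r ∨ t = 𝒱.inv r) ∧ t ∈ Q ∧ t ∈ Q' := by
  obtain ⟨u, hu, hu1, hu2⟩ := oriented hs
  have hou : 𝒱.ord u = 𝒱.ord s := by
    rcases hu with rfl | rfl
    · rfl
    · exact 𝒱.ord_inv _
  have h1 := prof_orient hQ hu1 (t := r) (by omega)
  have h2 := prof_orient hQ' hu2 (t := r) (by rw [𝒱.ord_inv]; omega)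
  unfold Distinguishes at hr
  by_cases h : r ∈ Q
  · exact ⟨r, Or.inl rfl, h, by tauto⟩
  · exact ⟨_, Or.inr rfl, by tauto, by tauto⟩

lemma uncross_aux {𝒱 : SubmodUniverse U} {P P' Q Q' : Set U} (hP : ProfileIn 𝒱 P)
    (hrob : StronglyRobust 𝒱 P) (hP' : ProfileIn 𝒱 P') (hrob' : StronglyRobust 𝒱 P')
    (hQ : ProfileIn 𝒱 Q) (hQ' : ProfileIn 𝒱 Q') {r s : U}
    (hr : EffDistinguishes 𝒱 r P P') (hs : EffDistinguishes 𝒱 s Q Q')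
    (ho : 𝒱.ord r ≤ 𝒱.ord s) :
    Nested 𝒱.toSepUniverse r s ∨ EffDistinguishes 𝒱 r Q Q' ∨
      ∃ c, EffDistinguishes 𝒱 c Q Q' ∧ CornerLike 𝒱.toSepUniverse r s c := by
  by_cases hn : Nested 𝒱.toSepUniverse r s
  · exact Or.inl hn
  by_cases hd : Distinguishes 𝒱.toSepUniverse r Q Q'
  · exact Or.inr (Or.inl ⟨hd, fun t ht => ho.trans (hs.2 t ht)⟩)
  right; right
  obtain ⟨s', hs', hs1, hs2⟩ := oriented hs
  obtain ⟨r', hr', hr1, hr2⟩ := agree hQ hQ' hs ho hd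
  have hrr : EffDistinguishes 𝒱 r' P P' := by
    rcases hr' with rfl | rfl
    · exact hr
    · exact eff_inv.2 hr
  have hss : EffDistinguishes 𝒱 s' Q Q' := by
    rcases hs' with rfl | rfl
    · exact hs
    · exact eff_inv.2 hs
  have hn' : ¬ Nested 𝒱.toSepUniverse r' s' := by
    rcases hr' with rfl | rfl <;> rcases hs' with rfl | rfl <;>
      simpa only [nested_inv_left, nested_inv_right] using hn
  have hc : ∀ c, CornerLike 𝒱.toSepUniverse r' s' c → CornerLike 𝒱.toSepUniverse r s c := by
    intro c h
    rcases hr' with rfl | rfl <;> rcases hs' with rfl | rfl <;>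
      simpa only [cornerLike_inv_left, cornerLike_inv_right] using h
  have : ∃ c, EffDistinguishes 𝒱 c Q Q' ∧ CornerLike 𝒱.toSepUniverse r' s' c := by
    rcases hrr.1 with h | h
    · exact uncross_lt hP' hrob' hP hQ hQ' (eff_swap.1 hrr) h.2 h.1 hss hs1 hs2 hr1 hr2 hn'
    · exact uncross_lt hP hrob hP' hQ hQ' hrr h.1 h.2 hss hs1 hs2 hr1 hr2 hn'
  obtain ⟨c, h1, h2⟩ := this
  exact ⟨c, h1, hc c h2⟩

/-- Condition (ii) holds automatically for nested sets of efficient distinguishers. -/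
lemma eff_of_nested {𝒱 : SubmodUniverse U} {P Q R : Set U} {T : Set U}
    (hP : ProfileIn 𝒱 P) (hQ : ProfileIn 𝒱 Q) (hR : ProfileIn 𝒱 R) {s s' : U}
    (hs : EffDistinguishes 𝒱 s Q R) (hsQ : s ∈ Q) (hsR : 𝒱.inv s ∈ R) (hsP : s ∈ P)
    (hT : ∀ t ∈ T, Nested 𝒱.toSepUniverse t s)
    (heff : P ≠ Q → ∃ t ∈ T, EffDistinguishes 𝒱 t P Q)
    (hmax : ∀ t ∈ P, (t ∈ T ∨ 𝒱.inv t ∈ T) → s ≤ t → s = t)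
    (hs' : s' ∈ P) (hle : s ≤ s') : 𝒱.ord s ≤ 𝒱.ord s' := by
  by_contra! hlt
  have hR' : 𝒱.inv s' ∈ R := by
    refine prof_down hR hsR (by rw [𝒱.ord_inv, 𝒱.ord_inv]; exact hlt.le)
      ((𝒱.le_iff _ _).1 hle) ?_
    intro h
    have := congrArg 𝒱.ord h
    simp only [𝒱.ord_inv] at this
    omega
  have hQ' : 𝒱.inv s' ∈ Q := by
    rcases prof_orient hQ hsQ hlt.le with h | h
    · exact absurd (hs.2 s' (Or.inl ⟨h, hR'⟩)) (not_le.2 hlt)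
    · exact h
  have hPQ : P ≠ Q := by
    rintro rfl
    exact prof_not_both hP hs' hQ'
  obtain ⟨t₀, ht₀, hte⟩ := heff hPQ
  have hto := hte.2 s' (Or.inl ⟨hs', hQ'⟩)
  obtain ⟨t, htt, htP, htQ⟩ := oriented hte
  have hot : 𝒱.ord t = 𝒱.ord t₀ := by
    rcases htt with rfl | rfl
    · rfl
    · exact 𝒱.ord_inv _
  have htT : t ∈ T ∨ 𝒱.inv t ∈ T := by
    rcases htt with rfl | rfl
    · exact Or.inl ht₀
    · right; rwa [𝒱.inv_inv]
  have hnest : Nested 𝒱.toSepUniverse t s := by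
    rcases htt with rfl | rfl
    · exact hT _ ht₀
    · exact nested_inv_left.2 (hT _ ht₀)
  have hlt' : 𝒱.ord t < 𝒱.ord s := by omega
  rcases hnest with h | h | h | h
  · refine prof_not_both hQ (prof_down hQ hsQ hlt'.le h ?_) htQ
    rintro rfl
    rw [𝒱.ord_inv] at hlt'
    omega
  · have : t ∈ R := by
      refine prof_down hR hsR (by rw [𝒱.ord_inv]; exact hlt'.le) h ?_
      rintro rfl
      simp only [𝒱.ord_inv] at hlt'
      omega
    exact absurd (hs.2 t (Or.inr ⟨htQ, this⟩)) (not_le.2 hlt')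
  · refine prof_not_both hP htP (prof_down hP hsP (by rw [𝒱.ord_inv]; exact hlt'.le) h ?_)
    intro h'
    have := congrArg 𝒱.ord h'
    simp only [𝒱.ord_inv] at this
    omega
  · have := hmax t htP htT ((𝒱.le_iff _ _).2 h)
    rw [← this] at hlt'
    omega

end Helpers


/-- Tree-of-tangles theorem for different orders: for every
set `𝔓` of pairwise distinguishable strongly robust profiles in a submodular
distributive universe there is a nested set `T` such that (i) any two profiles
in `𝔓` are distinguished by some separation in `T`, and (ii) for every `P ∈ 𝔓`,
every maximal element `s` of the set of orientations of members of `T` lying in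
`P`, and every `s' ∈ P` with `s ≤ s'`, we have `|s| ≤ |s'|`. -/
theorem tree_of_tangles_mixed_orders {W : Type*} [DistribLattice W] [Fintype W]
    (𝒱 : SubmodUniverse W) (𝔓 : Set (Set W))
    (h𝔓 : ∀ P ∈ 𝔓, ProfileIn 𝒱 P ∧ StronglyRobust 𝒱 P)
    (hdist : ∀ P ∈ 𝔓, ∀ Q ∈ 𝔓, P ≠ Q → Distinguishable 𝒱.toSepUniverse P Q) :
    ∃ T : Set W, NestedSet 𝒱.toSepUniverse T ∧
      (∀ P ∈ 𝔓, ∀ Q ∈ 𝔓, P ≠ Q → ∃ s ∈ T, Distinguishes 𝒱.toSepUniverse s P Q) ∧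
      (∀ P ∈ 𝔓, ∀ s ∈ P, (s ∈ T ∨ 𝒱.inv s ∈ T) →
        (∀ t ∈ P, (t ∈ T ∨ 𝒱.inv t ∈ T) → s ≤ t → s = t) →
        ∀ s' ∈ P, s ≤ s' → 𝒱.ord s ≤ 𝒱.ord s') := by
  classical
  by_cases hW : Nonempty W
  swap
  · refine ⟨∅, fun r hr => hr.elim, ?_, fun P _ s => absurd ⟨s⟩ hW⟩
    intro P hP Q hQ hne
    obtain ⟨s, _⟩ := hdist P hP Q hQ hne
    exact absurd ⟨s⟩ hW
  let A : Set W × Set W → Set W := fun p => {s | EffDistinguishes 𝒱 s p.1 p.2}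
  let I : Finset (Set W × Set W) :=
    (Set.toFinite {p : Set W × Set W | p.1 ∈ 𝔓 ∧ p.2 ∈ 𝔓 ∧ p.1 ≠ p.2}).toFinset
  have hI : ∀ p, p ∈ I ↔ p.1 ∈ 𝔓 ∧ p.2 ∈ 𝔓 ∧ p.1 ≠ p.2 := by
    intro p
    simp [I]
  have hne : ∀ p ∈ I, (A p).Nonempty := by
    intro p hp
    obtain ⟨h1, h2, h3⟩ := (hI p).1 hp
    have hex : ∃ n, ∃ s, Distinguishes 𝒱.toSepUniverse s p.1 p.2 ∧ 𝒱.ord s = n := by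
      obtain ⟨s, hs⟩ := hdist _ h1 _ h2 h3
      exact ⟨_, s, hs, rfl⟩
    obtain ⟨s, hs, hn⟩ := Nat.find_spec hex
    exact ⟨s, hs, fun t ht => hn ▸ Nat.find_min' hex ⟨t, ht, rfl⟩⟩
  obtain ⟨f, hf, hfn⟩ := splinter (Nested 𝒱.toSepUniverse) (Nested.refl' _)
    (fun _ _ h => h.symm') I A hne (by
      intro i hi j hj a ha b hb
      obtain ⟨i1, i2, -⟩ := (hI i).1 hi
      obtain ⟨j1, j2, -⟩ := (hI j).1 hj
      have i1 := h𝔓 _ i1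
      have i2 := h𝔓 _ i2
      have j1 := h𝔓 _ j1
      have j2 := h𝔓 _ j2
      rcases le_total (𝒱.ord a) (𝒱.ord b) with ho | ho
      · rcases uncross_aux i1.1 i1.2 i2.1 i2.2 j1.1 j2.1 ha hb ho with h | h | ⟨c, h1, h2⟩
        · exact Or.inl h
        · exact Or.inr (Or.inl h)
        · exact Or.inr (Or.inr (Or.inr ⟨c, Or.inr h1, h2⟩))
      · rcases uncross_aux j1.1 j1.2 j2.1 j2.2 i1.1 i2.1 hb ha ho with h | h | ⟨c, h1, h2⟩
        · exact Or.inl h.symm'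
        · exact Or.inr (Or.inr (Or.inl h))
        · exact Or.inr (Or.inr (Or.inr ⟨c, Or.inl h1, h2.swap⟩)))
  refine ⟨f '' (I : Set _), ?_, ?_, ?_⟩
  · rintro _ ⟨i, hi, rfl⟩ _ ⟨j, hj, rfl⟩
    exact hfn i hi j hj
  · intro P hP Q hQ hne
    have hm : (P, Q) ∈ I := (hI _).2 ⟨hP, hQ, hne⟩
    exact ⟨_, ⟨_, hm, rfl⟩, (hf _ hm).1⟩
  · intro P hP s hsP hsT hmax s' hs' hle
    have hex : ∃ i ∈ I, EffDistinguishes 𝒱 s i.1 i.2 ∧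
        ∀ t ∈ f '' (I : Set _), Nested 𝒱.toSepUniverse t s := by
      rcases hsT with ⟨i, hi, h⟩ | ⟨i, hi, h⟩
      · refine ⟨i, hi, h ▸ hf i hi, ?_⟩
        rintro _ ⟨j, hj, rfl⟩
        exact h ▸ hfn j hj i hi
      · refine ⟨i, hi, eff_inv.1 (h ▸ hf i hi), ?_⟩
        rintro _ ⟨j, hj, rfl⟩
        exact nested_inv_right.1 (h ▸ hfn j hj i hi)
    obtain ⟨i, hi, hse, hn⟩ := hex
    obtain ⟨i1, i2, -⟩ := (hI i).1 hi
    have heff : ∀ Q ∈ 𝔓, P ≠ Q → ∃ t ∈ f '' (I : Set _), EffDistinguishes 𝒱 t P Q := by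
      intro Q hQ hne
      have hm : (P, Q) ∈ I := (hI _).2 ⟨hP, hQ, hne⟩
      exact ⟨_, ⟨_, hm, rfl⟩, hf _ hm⟩
    rcases hse.1 with h | h
    · exact eff_of_nested (h𝔓 _ hP).1 (h𝔓 _ i1).1 (h𝔓 _ i2).1 hse h.1 h.2 hsP hn
        (heff _ i1) hmax hs' hle
    · exact eff_of_nested (h𝔓 _ hP).1 (h𝔓 _ i2).1 (h𝔓 _ i1).1 (eff_swap.1 hse) h.2 h.1 hsP hn
        (heff _ i2) hmax hs' hle


end SepDemo
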